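/- Let q be a prime power and r, n ≥ 1. Let E_{r,n}(F_q) denote the number of relatively irreducible monic polynomials in F_q[x_1,…,x_r] of total degree n, and for a prime power Q let I_{r,m}(F_Q) denote the number of irreducible monic polynomials in F_Q[x_1,…,x_r] of total degree m. Then E_{r,n}(F_q) = − ∑_{k | n, k > 1} (1/k) · ∑_{s | k} μ(s) · I_{r,n/k}(F_{q^s}), where μ is the number-theoretic Möbius function. -/

import Mathlib

open MvPolynomial

/-- The key of a monomial in the degree-lexicographic order: first total degree, then
lexicographic comparison of exponent vectors. -/
noncomputable def degLexKey {r : ℕ} (m : Fin r →₀ ℕ) : Lex (ℕ × Lex (Fin r →₀ ℕ)) :=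
  toLex (m.sum fun _ e => e, toLex m)

/-- A multivariate polynomial is monic if the coefficient of its deg-lex leading monomial is 1. -/
def MvMonic {r : ℕ} {F : Type*} [CommSemiring F] (f : MvPolynomial (Fin r) F) : Prop :=
  ∃ m ∈ f.support, (∀ m' ∈ f.support, degLexKey m' ≤ degLexKey m) ∧ f.coeff m = 1

noncomputable def Icount (F : Type) [Field F] (r n : ℕ) : ℕ :=
  Set.ncard {f : MvPolynomial (Fin r) F | f.totalDegree = n ∧ MvMonic f ∧ Irreducible f}

/-- A polynomial over `F` is relatively irreducible if it is irreducible over `F` but not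
absolutely irreducible, i.e. not irreducible over an algebraic closure of `F`. -/
noncomputable def Ecount (F : Type) [Field F] (r n : ℕ) : ℕ :=
  Set.ncard {f : MvPolynomial (Fin r) F | f.totalDegree = n ∧ MvMonic f ∧ Irreducible f ∧
    ¬ Irreducible (MvPolynomial.map (algebraMap F (AlgebraicClosure F)) f)}

/-!
Write `q` for the number of elements of `F`. Over the algebraic closure of `F`, an irreducible monic
polynomial over the extension of degree `s` becomes the product of one orbit of the `q ^ s`-power
Frobenius, acting on coefficients, on the irreducible monic polynomials, and every orbit arises in
this way. If `g` has period `K` under the `q`-power Frobenius, its orbit under the `q ^ s`-power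
Frobenius has `K / gcd(K, s)` elements. Hence `d` times the number of irreducible monic polynomials
of degree `d` over the extension is the sum of `deg g` over the `g` with
`deg g * (K / gcd(K, s)) = d`.

Now weight by `μ(s)` and sum over all `s ∣ k ∣ n`, with `d = n / k`. For each `g` the index `k` is
determined by `s`, and `s` runs over the divisors of `n / deg g`. Only the `g` of degree `n` survive
this sum; they are fixed by the Frobenius and hence are the absolutely irreducible polynomials over
`F`. So the sum over all `k ∣ n` counts the latter, whereas its term `k = 1` counts all irreducible
polynomials over `F`.
-/

section Monic

variable {τ F Ω : Type*} [Field F] [Field Ω] {m : MonomialOrder τ}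

theorem exists_monic_associated {f : MvPolynomial τ F} (hf : f ≠ 0) :
    ∃ g, m.Monic g ∧ Associated f g := by
  have hc : m.leadingCoeff f ≠ 0 := m.leadingCoeff_ne_zero_iff.2 hf
  refine ⟨f * C (m.leadingCoeff f)⁻¹, ?_,
    associated_mul_unit_right _ _ ((inv_ne_zero hc).isUnit.map C)⟩
  rw [MonomialOrder.Monic, MonomialOrder.leadingCoeff_mul, MonomialOrder.leadingCoeff_C,
    mul_inv_cancel₀ hc]

theorem eq_of_monic_of_associated {f g : MvPolynomial τ F} (hf : m.Monic f) (hg : m.Monic g)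
    (h : Associated f g) : f = g := by
  obtain ⟨u, rfl⟩ := h
  obtain ⟨c, -, hc⟩ := isUnit_iff_eq_C_of_isReduced.1 u.isUnit
  have hlc : m.leadingCoeff f * c = 1 := by
    rw [← MonomialOrder.leadingCoeff_C (m := m) c, ← MonomialOrder.leadingCoeff_mul, ← hc]
    exact hg
  rw [hf.leadingCoeff_eq_one, one_mul] at hlc
  rw [hc, hlc, C_1, mul_one]

theorem monic_map_iff (ι : F →+* Ω) {f : MvPolynomial τ F} :
    m.Monic (map ι f) ↔ m.Monic f := by
  simp only [MonomialOrder.Monic, MonomialOrder.leadingCoeff, MonomialOrder.degree,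
    support_map_of_injective f ι.injective, coeff_map, map_eq_one_iff ι ι.injective]

theorem totalDegree_map_eq (ι : F →+* Ω) (f : MvPolynomial τ F) :
    (map ι f).totalDegree = f.totalDegree := by
  simp only [totalDegree, support_map_of_injective f ι.injective]

theorem finite_setOf_totalDegree_eq [Finite τ] [Finite F] (d : ℕ) :
    {f : MvPolynomial τ F | f.totalDegree = d}.Finite := by
  have : Finite (restrictTotalDegree τ F d) := Module.finite_of_finite F
  exact (Set.toFinite (restrictTotalDegree τ F d : Set _)).subset
    fun f hf => (mem_restrictTotalDegree _ _ _).2 hf.le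

variable (m) in
/-- Irreducible polynomials over a field, normalised to be monic with respect to the monomial
order `m`: one representative of each class of associated irreducibles. -/
def MonicIrreducible (f : MvPolynomial τ F) : Prop :=
  m.Monic f ∧ Irreducible f

namespace MonicIrreducible

theorem eq_of_dvd {f g : MvPolynomial τ F} (hf : MonicIrreducible m f)
    (hg : MonicIrreducible m g) (h : f ∣ g) : f = g :=
  eq_of_monic_of_associated hf.1 hg.1 (hf.2.associated_of_dvd hg.2 h)

theorem mapEquiv_iff (σ : F ≃+* Ω) {f : MvPolynomial τ F} :
    MonicIrreducible m (mapEquiv τ σ f) ↔ MonicIrreducible m f :=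
  and_congr (monic_map_iff (σ : F →+* Ω)) (MulEquiv.irreducible_iff (mapEquiv τ σ))

theorem iterate_mapEquiv {f : MvPolynomial τ F} (hf : MonicIrreducible m f) (σ : F ≃+* F)
    (i : ℕ) : MonicIrreducible m ((mapEquiv τ σ)^[i] f) :=
  Function.Iterate.rec (MonicIrreducible m) hf (fun _ => (mapEquiv_iff σ).2) i

end MonicIrreducible

theorem ncard_monicIrreducible_congr (e : F ≃+* Ω) (d : ℕ) :
    {f : MvPolynomial τ F | f.totalDegree = d ∧ MonicIrreducible m f}.ncard =
      {f : MvPolynomial τ Ω | f.totalDegree = d ∧ MonicIrreducible m f}.ncard := by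
  rw [← Set.ncard_preimage_of_injective_subset_range (mapEquiv τ e).injective
    fun g _ => (mapEquiv τ e).surjective g]
  congr 1
  ext f
  exact and_congr (Eq.congr_left (totalDegree_map_eq (e : F →+* Ω) f).symm)
    (MonicIrreducible.mapEquiv_iff e).symm

theorem ncard_monicIrreducible_eq_of_card_eq [Finite Ω] (h : Nat.card F = Nat.card Ω) (d : ℕ) :
    {f : MvPolynomial τ F | f.totalDegree = d ∧ MonicIrreducible m f}.ncard =
      {f : MvPolynomial τ Ω | f.totalDegree = d ∧ MonicIrreducible m f}.ncard := by
  have : Finite F := Nat.finite_of_card_ne_zero (h ▸ Nat.card_pos.ne')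
  cases nonempty_fintype F
  cases nonempty_fintype Ω
  rw [Nat.card_eq_fintype_card, Nat.card_eq_fintype_card] at h
  exact ncard_monicIrreducible_congr (FiniteField.ringEquivOfCardEq h) d

end Monic

section OrbitProduct

open Function Finset

variable {M : Type*} [CommMonoid M]

/-- The product of the points of the cycle of `g` under `φ`, the norm of `g`. It is `1` if `g` is
not periodic, as `minimalPeriod φ g = 0` in that case. -/
noncomputable def orbitProd (φ : M → M) (g : M) : M :=
  ∏ i ∈ range (minimalPeriod φ g), φ^[i] g

theorem map_orbitProd {E : Type*} [FunLike E M M] [MonoidHomClass E M M] (φ : E) (g : M) :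
    φ (orbitProd φ g) = orbitProd φ g := by
  unfold orbitProd
  rw [map_prod]
  simp only [← iterate_succ_apply']
  cases hp : minimalPeriod φ g with
  | zero => rfl
  | succ k =>
    have hper : φ^[k + 1] g = g := hp ▸ iterate_minimalPeriod
    rw [prod_range_succ, prod_range_succ', hper, iterate_zero_apply]

theorem iterate_dvd_orbitProd {φ : M → M} {g : M} (hg : g ∈ periodicPts φ) (i : ℕ) :
    φ^[i] g ∣ orbitProd φ g := by
  rw [← iterate_mod_minimalPeriod_eq]
  exact dvd_prod_of_mem (fun i => φ^[i] g)
    (mem_range.2 (Nat.mod_lt _ (minimalPeriod_pos_of_mem_periodicPts hg)))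

theorem orbitProd_dvd [DecompositionMonoid M] {φ : M → M} {g a : M}
    (hirr : ∀ i, Irreducible (φ^[i] g))
    (heq : ∀ i k, φ^[i] g ∣ φ^[k] g → φ^[i] g = φ^[k] g) (hdvd : ∀ i, φ^[i] g ∣ a) :
    orbitProd φ g ∣ a := by
  refine prod_dvd_of_isRelPrime (fun i hi k hk hik => ?_) fun i _ => hdvd i
  refine (hirr i).isRelPrime_iff_not_dvd.2 fun h => hik ?_
  exact (iterate_eq_iterate_iff_of_lt_minimalPeriod (mem_range.1 hi) (mem_range.1 hk)).1 (heq i k h)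

end OrbitProduct

theorem dvd_of_map_dvd_map_of_fixed {A B : Type*} [CommRing A] [CommRing B] [IsDomain B]
    {j : A →+* B} (hj : Function.Injective j) {φ : B →+* B} (hφ : ∀ b, φ b = b ↔ b ∈ j.range)
    {a a' : A} (h : j a ∣ j a') : a ∣ a' := by
  obtain ⟨c, hc⟩ := h
  rcases eq_or_ne a 0 with rfl | ha
  · rw [map_zero, zero_mul] at hc
    rw [(map_eq_zero_iff j hj).1 hc]
  have hφj (x : A) : φ (j x) = j x := (hφ _).2 ⟨x, rfl⟩
  have hcfix : φ c = c := by
    refine mul_left_cancel₀ ((map_ne_zero_iff j hj).2 ha) ?_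
    rw [← hc, ← hφj a, ← map_mul, ← hc, hφj]
  obtain ⟨c, rfl⟩ := (hφ c).1 hcfix
  exact ⟨c, hj (by rw [hc, map_mul])⟩

section Descent

open Function Finset

variable {τ F Ω : Type*} [Field F] [Field Ω] {ι : F →+* Ω} {σ : Ω ≃+* Ω} {m : MonomialOrder τ}

theorem coeff_iterate_mapEquiv (σ : Ω ≃+* Ω) (i : ℕ) (d : τ →₀ ℕ) (g : MvPolynomial τ Ω) :
    coeff d ((mapEquiv τ σ)^[i] g) = σ^[i] (coeff d g) :=
  (Semiconj.iterate_right (f := coeff d) (fun g => coeff_map (σ : Ω →+* Ω) g d) i) g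

theorem mapEquiv_eq_iterate {ρ : Ω ≃+* Ω} {s : ℕ} (h : ⇑ρ = σ^[s]) :
    ⇑(mapEquiv τ ρ) = (mapEquiv τ σ)^[s] := by
  ext g d
  rw [coeff_iterate_mapEquiv, ← h]
  exact coeff_map _ _ _

theorem totalDegree_iterate_mapEquiv (σ : Ω ≃+* Ω) (i : ℕ) (g : MvPolynomial τ Ω) :
    ((mapEquiv τ σ)^[i] g).totalDegree = g.totalDegree :=
  Iterate.rec (fun h : MvPolynomial τ Ω => h.totalDegree = g.totalDegree) rfl
    (fun h hh => (totalDegree_map_eq (σ : Ω →+* Ω) h).trans hh) i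

theorem mem_periodicPts_mapEquiv (hσ : ∀ x, x ∈ periodicPts σ) (g : MvPolynomial τ Ω) :
    g ∈ periodicPts (mapEquiv τ σ) := by
  refine ⟨∏ d ∈ g.support, minimalPeriod σ (coeff d g),
    prod_pos fun d _ => minimalPeriod_pos_of_mem_periodicPts (hσ _), ?_⟩
  ext d
  rw [coeff_iterate_mapEquiv]
  by_cases hd : d ∈ g.support
  · exact (isPeriodicPt_minimalPeriod σ _).trans_dvd (dvd_prod_of_mem _ hd)
  · rw [notMem_support_iff.1 hd, iterate_map_zero]

theorem mapEquiv_eq_self_iff (hι : ∀ x, σ x = x ↔ x ∈ ι.range) (g : MvPolynomial τ Ω) :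
    mapEquiv τ σ g = g ↔ g ∈ (map (σ := τ) ι).range := by
  rw [RingHom.mem_range, ← Set.mem_range, mem_range_map_iff_coeffs_subset]
  have hfix : mapEquiv τ σ g = g ↔ ∀ d, σ (coeff d g) = coeff d g := by
    rw [MvPolynomial.ext_iff]
    exact forall_congr' fun d => Eq.congr_left (coeff_map (σ : Ω →+* Ω) g d)
  rw [hfix]
  constructor
  · intro h c hc
    obtain ⟨d, -, rfl⟩ := mem_coeffs_iff.1 hc
    exact (hι _).1 (h d)
  · intro h d
    by_cases hd : d ∈ g.support
    · exact (hι _).2 (h (coeff_mem_coeffs d (mem_support_iff.1 hd)))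
    · rw [notMem_support_iff.1 hd, map_zero]

theorem dvd_of_map_dvd_map (hι : ∀ x, σ x = x ↔ x ∈ ι.range) {f f' : MvPolynomial τ F}
    (h : map ι f ∣ map ι f') : f ∣ f' :=
  dvd_of_map_dvd_map_of_fixed (map_injective ι ι.injective)
    (φ := (mapEquiv τ σ : MvPolynomial τ Ω →+* MvPolynomial τ Ω)) (mapEquiv_eq_self_iff hι) h

theorem iterate_mapEquiv_dvd_map (hι : ∀ x, σ x = x ↔ x ∈ ι.range) {g : MvPolynomial τ Ω}
    {f : MvPolynomial τ F} (h : g ∣ map ι f) (i : ℕ) : (mapEquiv τ σ)^[i] g ∣ map ι f :=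
  Iterate.rec (· ∣ map ι f) h
    (fun _ hb => (mapEquiv_eq_self_iff hι _).2 ⟨f, rfl⟩ ▸ map_dvd (mapEquiv τ σ) hb) i

namespace MonicIrreducible

variable {f : MvPolynomial τ F} {g h : MvPolynomial τ Ω}

theorem orbitProd_dvd_map (hι : ∀ x, σ x = x ↔ x ∈ ι.range) (hg : MonicIrreducible m g)
    (hgf : g ∣ map ι f) : orbitProd (mapEquiv τ σ) g ∣ map ι f :=
  orbitProd_dvd (fun i => (hg.iterate_mapEquiv σ i).2)
    (fun i k => (hg.iterate_mapEquiv σ i).eq_of_dvd (hg.iterate_mapEquiv σ k))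
    (iterate_mapEquiv_dvd_map hι hgf)

theorem exists_map_eq_orbitProd (hι : ∀ x, σ x = x ↔ x ∈ ι.range)
    (hσ : ∀ x, x ∈ periodicPts σ) (hg : MonicIrreducible m g) :
    ∃ f, MonicIrreducible m f ∧ map ι f = orbitProd (mapEquiv τ σ) g := by
  obtain ⟨f, hf⟩ := (mapEquiv_eq_self_iff hι _).1 (map_orbitProd (mapEquiv τ σ) g)
  have hgf : g ∣ map ι f := hf ▸ iterate_dvd_orbitProd (mem_periodicPts_mapEquiv hσ g) 0
  have hmonic : m.Monic f := by
    rw [← monic_map_iff ι, hf]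
    exact MonomialOrder.Monic.prod fun i _ => (hg.iterate_mapEquiv σ i).1
  have hdvd {a : MvPolynomial τ F} (ha : g ∣ map ι a) : f ∣ a :=
    dvd_of_map_dvd_map hι (hf ▸ hg.orbitProd_dvd_map hι ha)
  have hprime : Prime f := by
    refine ⟨hmonic.ne_zero, fun hu => hg.2.not_isUnit (isUnit_of_dvd_unit hgf (hu.map _)),
      fun a b hab => ?_⟩
    have hgab : g ∣ map ι a * map ι b := map_mul (map ι) a b ▸ hgf.trans (map_dvd (map ι) hab)
    exact (hg.2.prime.dvd_or_dvd hgab).imp hdvd hdvd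
  exact ⟨f, ⟨hmonic, hprime.irreducible⟩, hf⟩

theorem map_eq_orbitProd_of_dvd (hι : ∀ x, σ x = x ↔ x ∈ ι.range)
    (hσ : ∀ x, x ∈ periodicPts σ) (hf : MonicIrreducible m f) (hg : MonicIrreducible m g)
    (hgf : g ∣ map ι f) : map ι f = orbitProd (mapEquiv τ σ) g := by
  obtain ⟨f', hf', hmap⟩ := hg.exists_map_eq_orbitProd hι hσ
  rw [← hmap, hf'.eq_of_dvd hf (dvd_of_map_dvd_map hι (hmap ▸ hg.orbitProd_dvd_map hι hgf))]

theorem exists_dvd_map (hι : ∀ x, σ x = x ↔ x ∈ ι.range) (hf : MonicIrreducible m f) :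
    ∃ g, MonicIrreducible m g ∧ g ∣ map ι f := by
  have hunit : ¬ IsUnit (map ι f) := fun hu =>
    hf.2.not_isUnit (isUnit_of_dvd_one (dvd_of_map_dvd_map hι (by simpa using hu.dvd)))
  obtain ⟨g, hg, hgf⟩ := WfDvdMonoid.exists_irreducible_factor hunit
    ((monic_map_iff ι).2 hf.1).ne_zero
  obtain ⟨h, hmonic, hgh⟩ := exists_monic_associated (m := m) hg.ne_zero
  exact ⟨h, ⟨hmonic, hgh.irreducible hg⟩, hgh.symm.dvd.trans hgf⟩

theorem totalDegree_orbitProd (hg : MonicIrreducible m g) (σ : Ω ≃+* Ω) :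
    (orbitProd (mapEquiv τ σ) g).totalDegree = g.totalDegree * minimalPeriod (mapEquiv τ σ) g := by
  have (k : ℕ) : (∏ i ∈ range k, (mapEquiv τ σ)^[i] g).totalDegree = g.totalDegree * k := by
    induction k with
    | zero => simp
    | succ k ih =>
      rw [prod_range_succ, totalDegree_mul_of_isDomain
        (prod_ne_zero_iff.2 fun i _ => (hg.iterate_mapEquiv σ i).1.ne_zero)
        (hg.iterate_mapEquiv σ k).1.ne_zero, ih, totalDegree_iterate_mapEquiv, mul_add_one]
  exact this _

theorem dvd_orbitProd_iff (hσ : ∀ x, x ∈ periodicPts σ) (hg : MonicIrreducible m g)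
    (hh : MonicIrreducible m h) :
    h ∣ orbitProd (mapEquiv τ σ) g ↔
      ∃ i < minimalPeriod (mapEquiv τ σ) g, (mapEquiv τ σ)^[i] g = h := by
  constructor
  · intro hdvd
    obtain ⟨i, hi, hhi⟩ := hh.2.prime.exists_mem_finset_dvd hdvd
    exact ⟨i, mem_range.1 hi, (hh.eq_of_dvd (hg.iterate_mapEquiv σ i) hhi).symm⟩
  · rintro ⟨i, -, rfl⟩
    exact iterate_dvd_orbitProd (mem_periodicPts_mapEquiv hσ g) i

theorem setOf_dvd_map_eq_image (hι : ∀ x, σ x = x ↔ x ∈ ι.range) (hσ : ∀ x, x ∈ periodicPts σ)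
    (hf : MonicIrreducible m f) (hg : MonicIrreducible m g) (hgf : g ∣ map ι f) :
    {h | MonicIrreducible m h ∧ h ∣ map ι f} =
      (fun i => (mapEquiv τ σ)^[i] g) '' range (minimalPeriod (mapEquiv τ σ) g) := by
  ext h
  rw [hf.map_eq_orbitProd_of_dvd hι hσ hg hgf, Set.mem_image]
  simp only [mem_coe, mem_range]
  constructor
  · rintro ⟨hh, hdvd⟩
    exact (hg.dvd_orbitProd_iff hσ hh).1 hdvd
  · rintro ⟨i, hi, rfl⟩
    have hgi := hg.iterate_mapEquiv σ i
    exact ⟨hgi, (hg.dvd_orbitProd_iff hσ hgi).2 ⟨i, hi, rfl⟩⟩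

theorem finite_setOf_dvd_map (hι : ∀ x, σ x = x ↔ x ∈ ι.range) (hσ : ∀ x, x ∈ periodicPts σ)
    (hf : MonicIrreducible m f) : {h | MonicIrreducible m h ∧ h ∣ map ι f}.Finite := by
  obtain ⟨g, hg, hgf⟩ := hf.exists_dvd_map hι
  rw [hf.setOf_dvd_map_eq_image hι hσ hg hgf]
  exact (finite_toSet _).image _

theorem sum_totalDegree_of_dvd_map (hι : ∀ x, σ x = x ↔ x ∈ ι.range)
    (hσ : ∀ x, x ∈ periodicPts σ) (hf : MonicIrreducible m f) {T : Finset (MvPolynomial τ Ω)}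
    (hT : ∀ h, h ∈ T ↔ MonicIrreducible m h ∧ h ∣ map ι f) :
    ∑ h ∈ T, h.totalDegree = f.totalDegree := by
  classical
  obtain ⟨g, hg, hgf⟩ := hf.exists_dvd_map hι
  have hTimage : T = (range (minimalPeriod (mapEquiv τ σ) g)).image
      fun i => (mapEquiv τ σ)^[i] g := by
    rw [← coe_inj, coe_image, ← hf.setOf_dvd_map_eq_image hι hσ hg hgf]
    exact Set.ext hT
  rw [hTimage, sum_image fun i hi k hk => (iterate_eq_iterate_iff_of_lt_minimalPeriod
    (mem_range.1 hi) (mem_range.1 hk)).1, ← totalDegree_map_eq ι f,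
    hf.map_eq_orbitProd_of_dvd hι hσ hg hgf, hg.totalDegree_orbitProd]
  simp only [totalDegree_iterate_mapEquiv, sum_const, card_range, smul_eq_mul, mul_comm]

end MonicIrreducible

theorem ncard_monicIrreducible_map (hι : ∀ x, σ x = x ↔ x ∈ ι.range)
    (hσ : ∀ x, x ∈ periodicPts σ) (n : ℕ) :
    {f : MvPolynomial τ F | f.totalDegree = n ∧ MonicIrreducible m f ∧
      Irreducible (map ι f)}.ncard =
    {g : MvPolynomial τ Ω | g.totalDegree = n ∧ MonicIrreducible m g ∧
      minimalPeriod (mapEquiv τ σ) g = 1}.ncard := by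
  rw [← Set.ncard_image_of_injective _ (map_injective ι ι.injective)]
  congr 1
  ext g
  constructor
  · rintro ⟨f, ⟨rfl, hf, hirr⟩, rfl⟩
    exact ⟨totalDegree_map_eq ι f, ⟨(monic_map_iff ι).2 hf.1, hirr⟩,
      minimalPeriod_eq_one_iff_isFixedPt.2 ((mapEquiv_eq_self_iff hι _).2 ⟨f, rfl⟩)⟩
  · rintro ⟨rfl, hg, hper⟩
    obtain ⟨f, hf, hmap⟩ := hg.exists_map_eq_orbitProd hι hσ
    have hmapg : map ι f = g := by
      rw [hmap, orbitProd, hper, prod_range_one, iterate_zero_apply]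
    exact ⟨f, ⟨by rw [← hmapg, totalDegree_map_eq], hf, hmapg ▸ hg.2⟩, hmapg⟩

end Descent

section Counting

open Function Finset

variable {τ F Ω : Type*} [Finite τ] [Field F] [Finite F] [Field Ω] {ι : F →+* Ω} {σ : Ω ≃+* Ω}
  {m : MonomialOrder τ}

theorem finite_setOf_totalDegree_mul_minimalPeriod_eq (hι : ∀ x, σ x = x ↔ x ∈ ι.range)
    (hσ : ∀ x, x ∈ periodicPts σ) (d : ℕ) :
    {g | MonicIrreducible m g ∧ g.totalDegree * minimalPeriod (mapEquiv τ σ) g = d}.Finite := by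
  have hfin : {f : MvPolynomial τ F | f.totalDegree = d ∧ MonicIrreducible m f}.Finite :=
    (finite_setOf_totalDegree_eq d).subset fun _ hf => hf.1
  refine (hfin.biUnion fun f hf => hf.2.finite_setOf_dvd_map hι hσ).subset ?_
  rintro g ⟨hg, hgd⟩
  obtain ⟨f, hf, hmap⟩ := hg.exists_map_eq_orbitProd hι hσ
  refine Set.mem_biUnion ⟨?_, hf⟩ ⟨hg, ?_⟩
  · rw [← totalDegree_map_eq ι, hmap, hg.totalDegree_orbitProd, hgd]
  · rw [hmap]
    exact iterate_dvd_orbitProd (mem_periodicPts_mapEquiv hσ g) 0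

theorem mul_ncard_monicIrreducible (hι : ∀ x, σ x = x ↔ x ∈ ι.range)
    (hσ : ∀ x, x ∈ periodicPts σ) {d : ℕ} {T : Finset (MvPolynomial τ Ω)}
    (hT : ∀ g, g ∈ T ↔
      MonicIrreducible m g ∧ g.totalDegree * minimalPeriod (mapEquiv τ σ) g = d) :
    d * {f : MvPolynomial τ F | f.totalDegree = d ∧ MonicIrreducible m f}.ncard =
      ∑ g ∈ T, g.totalDegree := by
  classical
  set S := {f : MvPolynomial τ F | f.totalDegree = d ∧ MonicIrreducible m f}
  have hS : S.Finite := (finite_setOf_totalDegree_eq d).subset fun _ hf => hf.1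
  have hdeg {f : MvPolynomial τ F} {g : MvPolynomial τ Ω} (hg : MonicIrreducible m g)
      (h : map ι f = orbitProd (mapEquiv τ σ) g) :
      g.totalDegree * minimalPeriod (mapEquiv τ σ) g = f.totalDegree := by
    rw [← hg.totalDegree_orbitProd, ← h, totalDegree_map_eq]
  choose! N hN using fun g (hg : MonicIrreducible m g) => hg.exists_map_eq_orbitProd hι hσ
  have hNmem : ∀ g ∈ T, N g ∈ hS.toFinset := fun g hg => by
    obtain ⟨hg, hgd⟩ := (hT g).1 hg
    exact hS.mem_toFinset.2 ⟨(hdeg hg (hN g hg).2).symm.trans hgd, (hN g hg).1⟩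
  have hfiber : ∀ f ∈ hS.toFinset, ∑ g ∈ T with N g = f, g.totalDegree = d := fun f hf => by
    obtain ⟨hfd, hf⟩ := hS.mem_toFinset.1 hf
    rw [← hfd]
    refine hf.sum_totalDegree_of_dvd_map hι hσ fun g => ?_
    rw [mem_filter, hT]
    constructor
    · rintro ⟨⟨hg, -⟩, rfl⟩
      exact ⟨hg, (hN g hg).2 ▸ iterate_dvd_orbitProd (mem_periodicPts_mapEquiv hσ g) 0⟩
    · rintro ⟨hg, hgf⟩
      have hmap := hf.map_eq_orbitProd_of_dvd hι hσ hg hgf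
      exact ⟨⟨hg, (hdeg hg hmap).trans hfd⟩,
        map_injective ι ι.injective ((hN g hg).2.trans hmap.symm)⟩
  rw [← sum_fiberwise_of_maps_to hNmem, sum_congr rfl hfiber, sum_const, smul_eq_mul, mul_comm,
    Set.ncard_eq_toFinset_card _ hS]

end Counting

section Frobenius

open Function

theorem mem_periodicPts_algHom {F Ω : Type*} [Field F] [Field Ω] [Algebra F Ω]
    [Algebra.IsAlgebraic F Ω] (σ : Ω →ₐ[F] Ω) (x : Ω) : x ∈ periodicPts σ := by
  have hmaps := Polynomial.rootSet_mapsTo (p := minpoly F x) σ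
  have hx : x ∈ (minpoly F x).rootSet Ω := Polynomial.mem_rootSet.2
    ⟨minpoly.ne_zero (Algebra.IsIntegral.isIntegral x), minpoly.aeval F x⟩
  have hinj : Injective (hmaps.restrict σ _ _) := hmaps.restrict_inj.2 σ.injective.injOn
  exact Semiconj.mapsTo_periodicPts (g := Subtype.val) (fun _ => rfl)
    (hinj.mem_periodicPts ⟨x, hx⟩)

theorem pow_natCard_eq_self_iff_mem_range {K Ω : Type*} [Field K] [Finite K] [Field Ω]
    (ι : K →+* Ω) (x : Ω) : x ^ Nat.card K = x ↔ x ∈ ι.range := by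
  constructor
  · intro hx
    refine Polynomial.splits_X_pow_nat_card_sub_X.mem_range_of_isRoot
      (FiniteField.X_pow_card_sub_X_ne_zero K Finite.one_lt_card) ?_
    simp [Polynomial.IsRoot, hx]
  · rintro ⟨y, rfl⟩
    cases nonempty_fintype K
    rw [← map_pow, Nat.card_eq_fintype_card, FiniteField.pow_card]

theorem nonempty_ringHom_algebraicClosure {F K : Type*} [Field F] [Finite F] [Field K] {s : ℕ}
    (hs : s ≠ 0) (hK : Nat.card K = Nat.card F ^ s) : Nonempty (K →+* AlgebraicClosure F) := by
  obtain ⟨p, _⟩ := CharP.exists F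
  have : Fact p.Prime := ⟨CharP.char_is_prime F p⟩
  have : NeZero s := ⟨hs⟩
  have : Finite K := Nat.finite_of_card_ne_zero (hK ▸ (pow_pos Nat.card_pos s).ne')
  cases nonempty_fintype K
  cases nonempty_fintype (FiniteField.Extension F p s)
  let e : K ≃+* FiniteField.Extension F p s := FiniteField.ringEquivOfCardEq <| by
    rw [Fintype.card_eq_nat_card, Fintype.card_eq_nat_card, hK, FiniteField.natCard_extension]
  let j : FiniteField.Extension F p s →ₐ[F] AlgebraicClosure F := IsAlgClosed.lift
  exact ⟨(j : FiniteField.Extension F p s →+* AlgebraicClosure F).comp e⟩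

end Frobenius

section Moebius

open Finset ArithmeticFunction

theorem sum_divisors_moebius (N : ℕ) : ∑ s ∈ N.divisors, moebius s = if N = 1 then 1 else 0 := by
  rw [← coe_mul_zeta_apply, moebius_mul_coe_zeta, one_apply]

theorem dvd_div_div_gcd {K N s : ℕ} (hK : K ∣ N) (hs : s ∣ N) : s ∣ N / (K / K.gcd s) := by
  have hgcd := Nat.gcd_dvd_left K s
  refine (Nat.dvd_div_iff_mul_dvd ((Nat.div_dvd_of_dvd hgcd).trans hK)).2 ?_
  rw [Nat.div_mul_right_comm hgcd]
  exact Nat.lcm_dvd hK hs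

theorem sum_divisors_sum_divisors_moebius_ite {n d K : ℕ} (hn : n ≠ 0) (hdvd : d * K ∣ n) :
    ∑ k ∈ n.divisors, ∑ s ∈ k.divisors, (if d * (K / K.gcd s) = n / k then moebius s else 0) =
      if n = d then 1 else 0 := by
  obtain ⟨N, rfl⟩ : d ∣ n := dvd_of_mul_right_dvd hdvd
  have hd : 0 < d := Nat.pos_of_ne_zero (left_ne_zero_of_mul hn)
  have hN : 0 < N := Nat.pos_of_ne_zero (right_ne_zero_of_mul hn)
  have hKN : K ∣ N := Nat.dvd_of_mul_dvd_mul_left hd hdvd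
  have hcond {k s : ℕ} (hk : k ∣ d * N) :
      d * (K / K.gcd s) = d * N / k ↔ K / K.gcd s * k = N := by
    rw [Nat.eq_div_iff_mul_eq_left (ne_zero_of_dvd_ne_zero hn hk) hk, mul_assoc,
      Nat.mul_right_inj hd.ne', eq_comm]
  have hdvdN (s : ℕ) : K / K.gcd s ∣ N := (Nat.div_dvd_of_dvd (Nat.gcd_dvd_left K s)).trans hKN
  calc
    _ = ∑ s ∈ N.divisors, moebius s := by
      rw [sum_sigma', ← sum_filter]
      refine sum_nbij' (fun x => x.2) (fun s => ⟨N / (K / K.gcd s), s⟩) ?_ ?_ ?_ ?_ fun _ _ => rfl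
      · rintro ⟨k, s⟩ hx
        simp only [mem_filter, mem_sigma, Nat.mem_divisors] at hx ⊢
        exact ⟨hx.1.2.1.trans (Dvd.intro_left _ ((hcond hx.1.1.1).1 hx.2)), hN.ne'⟩
      · intro s hs
        have hs := Nat.dvd_of_mem_divisors hs
        have hk : N / (K / K.gcd s) ∣ d * N := (Nat.div_dvd_of_dvd (hdvdN s)).mul_left d
        simp only [mem_filter, mem_sigma, Nat.mem_divisors]
        exact ⟨⟨⟨hk, hn⟩, dvd_div_div_gcd hKN hs, ne_zero_of_dvd_ne_zero hn hk⟩,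
          (hcond hk).2 (Nat.mul_div_cancel' (hdvdN s))⟩
      · rintro ⟨k, s⟩ hx
        simp only [mem_filter, mem_sigma, Nat.mem_divisors] at hx
        have hkN := (hcond hx.1.1.1).1 hx.2
        have hP : 0 < K / K.gcd s := Nat.pos_of_dvd_of_pos (hdvdN s) hN
        simp only [Nat.div_eq_of_eq_mul_right hP hkN.symm]
      · exact fun _ _ => rfl
    _ = _ := by
      rw [sum_divisors_moebius]
      simp [hd.ne']

end Moebius

section AlgebraicClosure

open Function Finset

variable {τ F : Type*} [Field F] [Finite F] {m : MonomialOrder τ}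

variable (F) in
/-- The automorphism `x ↦ x ^ q` of the algebraic closure of a field `F` with `q` elements. -/
noncomputable def closureFrobenius : AlgebraicClosure F ≃ₐ[F] AlgebraicClosure F :=
  letI := Fintype.ofFinite F
  FiniteField.frobeniusAlgEquivOfAlgebraic F (AlgebraicClosure F)

theorem closureFrobenius_pow_apply (s : ℕ) (x : AlgebraicClosure F) :
    (closureFrobenius F ^ s) x = x ^ Nat.card F ^ s := by
  cases nonempty_fintype F
  rw [AlgEquiv.coe_pow, Nat.card_eq_fintype_card, closureFrobenius]
  convert congrFun (FiniteField.coe_frobeniusAlgEquivOfAlgebraic_iterate F (AlgebraicClosure F) s) x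

/-- The degree over `F` of the field generated by the coefficients of `g`, encoded as the period
of `g` under raising all coefficients to the power `q`, where `F` has `q` elements. -/
noncomputable def frobeniusPeriod (g : MvPolynomial τ (AlgebraicClosure F)) : ℕ :=
  minimalPeriod (mapEquiv τ (closureFrobenius F).toRingEquiv) g

theorem minimalPeriod_mapEquiv_pow {s : ℕ} (hs : s ≠ 0) (g : MvPolynomial τ (AlgebraicClosure F)) :
    minimalPeriod (mapEquiv τ (closureFrobenius F ^ s : Gal(AlgebraicClosure F/F)).toRingEquiv) g =
      frobeniusPeriod g / (frobeniusPeriod g).gcd s := by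
  rw [mapEquiv_eq_iterate (AlgEquiv.coe_pow (closureFrobenius F) s),
    minimalPeriod_iterate_eq_div_gcd hs]
  rfl

theorem mem_periodicPts_closureFrobenius_pow (s : ℕ) (x : AlgebraicClosure F) :
    x ∈ periodicPts (closureFrobenius F ^ s : Gal(AlgebraicClosure F/F)).toRingEquiv :=
  mem_periodicPts_algHom (closureFrobenius F ^ s : Gal(AlgebraicClosure F/F)).toAlgHom x

theorem closureFrobenius_pow_eq_self_iff {K : Type*} [Field K] [Finite K] {s : ℕ}
    (hK : Nat.card K = Nat.card F ^ s) (ι : K →+* AlgebraicClosure F) (x : AlgebraicClosure F) :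
    (closureFrobenius F ^ s : Gal(AlgebraicClosure F/F)).toRingEquiv x = x ↔ x ∈ ι.range := by
  rw [← pow_natCard_eq_self_iff_mem_range ι, hK, ← closureFrobenius_pow_apply]
  rfl

theorem ncard_absolutelyIrreducible (n : ℕ) :
    {f : MvPolynomial τ F | f.totalDegree = n ∧ MonicIrreducible m f ∧
      Irreducible (map (algebraMap F (AlgebraicClosure F)) f)}.ncard =
    {g : MvPolynomial τ (AlgebraicClosure F) | g.totalDegree = n ∧ MonicIrreducible m g ∧
      frobeniusPeriod g = 1}.ncard := by
  rw [ncard_monicIrreducible_map (closureFrobenius_pow_eq_self_iff (pow_one _).symm _)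
    (mem_periodicPts_closureFrobenius_pow 1)]
  simp only [minimalPeriod_mapEquiv_pow one_ne_zero, Nat.gcd_one_right, Nat.div_one]

theorem sum_totalDegree_ite_eq {n : ℕ} (hn : n ≠ 0)
    {T : Finset (MvPolynomial τ (AlgebraicClosure F))}
    (hT : ∀ g, g ∈ T ↔ MonicIrreducible m g ∧ g.totalDegree * frobeniusPeriod g ∣ n) :
    ∑ g ∈ T, g.totalDegree * (if n = g.totalDegree then 1 else 0) =
      n * {f : MvPolynomial τ F | f.totalDegree = n ∧ MonicIrreducible m f ∧
        Irreducible (map (algebraMap F (AlgebraicClosure F)) f)}.ncard := by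
  classical
  have hset : {g : MvPolynomial τ (AlgebraicClosure F) | g.totalDegree = n ∧
      MonicIrreducible m g ∧ frobeniusPeriod g = 1} = {g ∈ T | n = g.totalDegree} := by
    ext g
    rw [mem_coe, mem_filter, hT]
    constructor
    · rintro ⟨rfl, hg, hper⟩
      exact ⟨⟨hg, by rw [hper, mul_one]⟩, rfl⟩
    · rintro ⟨⟨hg, hdvd⟩, rfl⟩
      exact ⟨rfl, hg, Nat.eq_one_of_dvd_one
        ((mul_dvd_mul_iff_left hn).1 (hdvd.trans (mul_one _).symm.dvd))⟩
  rw [ncard_absolutelyIrreducible, hset, Set.ncard_coe_finset, card_filter, mul_sum]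
  refine sum_congr rfl fun g _ => ?_
  split_ifs with h
  · rw [← h]
  · simp

variable [Finite τ]

theorem mul_ncard_monicIrreducible_of_card_eq_pow {K : Type*} [Field K] {s d : ℕ} (hs : s ≠ 0)
    (hK : Nat.card K = Nat.card F ^ s) {T : Finset (MvPolynomial τ (AlgebraicClosure F))}
    (hT : ∀ g, g ∈ T ↔ MonicIrreducible m g ∧
      g.totalDegree * (frobeniusPeriod g / (frobeniusPeriod g).gcd s) = d) :
    d * {f : MvPolynomial τ K | f.totalDegree = d ∧ MonicIrreducible m f}.ncard =
      ∑ g ∈ T, g.totalDegree := by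
  have : Finite K := Nat.finite_of_card_ne_zero (hK ▸ (pow_pos Nat.card_pos s).ne')
  obtain ⟨ι⟩ := nonempty_ringHom_algebraicClosure hs hK
  refine mul_ncard_monicIrreducible (closureFrobenius_pow_eq_self_iff hK ι)
    (mem_periodicPts_closureFrobenius_pow s) fun g => ?_
  rw [hT, minimalPeriod_mapEquiv_pow hs]

theorem finite_setOf_totalDegree_mul_frobeniusPeriod_dvd {n : ℕ} (hn : n ≠ 0) :
    {g : MvPolynomial τ (AlgebraicClosure F) | MonicIrreducible m g ∧
      g.totalDegree * frobeniusPeriod g ∣ n}.Finite := by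
  have hfin (d : ℕ) := finite_setOf_totalDegree_mul_minimalPeriod_eq (τ := τ) (m := m)
    (closureFrobenius_pow_eq_self_iff (F := F) (pow_one _).symm (algebraMap F (AlgebraicClosure F)))
    (mem_periodicPts_closureFrobenius_pow 1) d
  refine (n.divisors.finite_toSet.biUnion fun d _ => hfin d).subset ?_
  rintro g ⟨hg, hgn⟩
  exact Set.mem_biUnion (mem_coe.2 (Nat.mem_divisors.2 ⟨hgn, hn⟩)) ⟨hg, rfl⟩

theorem mul_ncard_monicIrreducible_eq_sum_ite {K : Type*} [Field K] {n k s : ℕ} (hn : n ≠ 0)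
    (hk : k ∣ n) (hs : s ∣ k) (hK : Nat.card K = Nat.card F ^ s)
    {T : Finset (MvPolynomial τ (AlgebraicClosure F))}
    (hT : ∀ g, g ∈ T ↔ MonicIrreducible m g ∧ g.totalDegree * frobeniusPeriod g ∣ n) :
    n / k * {f : MvPolynomial τ K | f.totalDegree = n / k ∧ MonicIrreducible m f}.ncard =
      ∑ g ∈ T, if g.totalDegree * (frobeniusPeriod g / (frobeniusPeriod g).gcd s) = n / k
        then g.totalDegree else 0 := by
  classical
  have hs0 : s ≠ 0 := ne_zero_of_dvd_ne_zero hn (hs.trans hk)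
  rw [← sum_filter]
  refine mul_ncard_monicIrreducible_of_card_eq_pow hs0 hK fun g => ?_
  rw [mem_filter, hT, and_assoc, and_congr_right_iff, and_iff_right_iff_imp]
  intro _ hdeg
  calc g.totalDegree * frobeniusPeriod g
    _ ∣ g.totalDegree * (frobeniusPeriod g / (frobeniusPeriod g).gcd s) * s := by
      rw [mul_assoc, Nat.div_mul_right_comm (Nat.gcd_dvd_left _ _)]
      exact mul_dvd_mul_left _ (Nat.dvd_lcm_left _ s)
    _ ∣ n / k * k := by
      rw [hdeg]
      exact mul_dvd_mul_left _ hs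
    _ = n := Nat.div_mul_cancel hk

theorem mul_one_div_mul_ncard_monicIrreducible {K : Type*} [Field K] {n k s : ℕ} (hn : n ≠ 0)
    (hk : k ∣ n) (hs : s ∣ k) (hK : Nat.card K = Nat.card F ^ s)
    {T : Finset (MvPolynomial τ (AlgebraicClosure F))}
    (hT : ∀ g, g ∈ T ↔ MonicIrreducible m g ∧ g.totalDegree * frobeniusPeriod g ∣ n) (c : ℤ) :
    (n : ℚ) * (1 / k * (c *
        {f : MvPolynomial τ K | f.totalDegree = n / k ∧ MonicIrreducible m f}.ncard)) =
      ∑ g ∈ T, (g.totalDegree : ℚ) *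
        (if g.totalDegree * (frobeniusPeriod g / (frobeniusPeriod g).gcd s) = n / k
          then c else 0 : ℤ) := by
  rw [← mul_assoc, mul_one_div, ← Nat.cast_div_charZero hk, mul_left_comm, ← Nat.cast_mul,
    mul_ncard_monicIrreducible_eq_sum_ite hn hk hs hK hT, Nat.cast_sum, mul_sum]
  refine sum_congr rfl fun g _ => ?_
  split_ifs <;> simp [mul_comm]

open ArithmeticFunction in
theorem sum_moebius_mul_ncard_monicIrreducible (K : ℕ → Type*) [∀ s, Field (K s)]
    (hK : ∀ s ≠ 0, Nat.card (K s) = Nat.card F ^ s) {n : ℕ} (hn : n ≠ 0) :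
    ∑ k ∈ n.divisors, (1 / (k : ℚ)) * ∑ s ∈ k.divisors, (moebius s : ℚ) *
        {f : MvPolynomial τ (K s) | f.totalDegree = n / k ∧ MonicIrreducible m f}.ncard =
      {f : MvPolynomial τ F | f.totalDegree = n ∧ MonicIrreducible m f ∧
        Irreducible (map (algebraMap F (AlgebraicClosure F)) f)}.ncard := by
  have hfin := finite_setOf_totalDegree_mul_frobeniusPeriod_dvd (τ := τ) (F := F) (m := m) hn
  have hT (g) := hfin.mem_toFinset (a := g)
  set T := hfin.toFinset
  refine mul_left_cancel₀ (Nat.cast_ne_zero.2 hn : (n : ℚ) ≠ 0) ?_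
  calc
    _ = ∑ k ∈ n.divisors, ∑ s ∈ k.divisors, ∑ g ∈ T, (g.totalDegree : ℚ) *
          (if g.totalDegree * (frobeniusPeriod g / (frobeniusPeriod g).gcd s) = n / k
            then moebius s else 0 : ℤ) := by
      simp only [mul_sum]
      exact sum_congr rfl fun k hk => sum_congr rfl fun s hs =>
        mul_one_div_mul_ncard_monicIrreducible hn (Nat.dvd_of_mem_divisors hk)
          (Nat.dvd_of_mem_divisors hs) (hK s (Nat.pos_of_mem_divisors hs).ne') hT _
    _ = ∑ g ∈ T, (g.totalDegree : ℚ) * (if n = g.totalDegree then 1 else 0 : ℤ) := by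
      rw [sum_congr rfl fun k _ => sum_comm, sum_comm]
      refine sum_congr rfl fun g hg => ?_
      rw [← sum_divisors_sum_divisors_moebius_ite hn ((hT g).1 hg).2]
      simp only [← mul_sum, Int.cast_sum]
    _ = _ := by
      exact_mod_cast sum_totalDegree_ite_eq hn hT

end AlgebraicClosure

section RelativelyIrreducible

variable {τ F : Type*} [Finite τ] [Field F] [Finite F]

theorem ncard_monicIrreducible_eq_add {Ω : Type*} [Field Ω] (m : MonomialOrder τ) (ι : F →+* Ω)
    (n : ℕ) : {f : MvPolynomial τ F | f.totalDegree = n ∧ MonicIrreducible m f}.ncard =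
      {f : MvPolynomial τ F | f.totalDegree = n ∧ MonicIrreducible m f ∧
        Irreducible (map ι f)}.ncard +
      {f : MvPolynomial τ F | f.totalDegree = n ∧ MonicIrreducible m f ∧
        ¬ Irreducible (map ι f)}.ncard := by
  have hfin : {f : MvPolynomial τ F | f.totalDegree = n ∧ MonicIrreducible m f}.Finite :=
    (finite_setOf_totalDegree_eq n).subset fun _ hf => hf.1
  rw [← Set.ncard_inter_add_ncard_sdiff_eq_ncard _ {f | Irreducible (map ι f)} hfin]
  congr 2 <;> exact Set.ext fun f => and_assoc

theorem stmt6_general (m : MonomialOrder τ) (K : ℕ → Type*) [∀ s, Field (K s)]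
    (hK : ∀ s ≠ 0, Nat.card (K s) = Nat.card F ^ s) {n : ℕ} (hn : n ≠ 0) :
    ({f : MvPolynomial τ F | f.totalDegree = n ∧ MonicIrreducible m f ∧
        ¬ Irreducible (map (algebraMap F (AlgebraicClosure F)) f)}.ncard : ℚ) =
      - ∑ k ∈ n.divisors.filter (fun k => 1 < k), (1 / (k : ℚ)) *
          ∑ s ∈ k.divisors, (ArithmeticFunction.moebius s : ℚ) *
            {f : MvPolynomial τ (K s) | f.totalDegree = n / k ∧ MonicIrreducible m f}.ncard := by
  have hsum := sum_moebius_mul_ncard_monicIrreducible (m := m) K hK hn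
  have hone : {f : MvPolynomial τ (K 1) | f.totalDegree = n ∧ MonicIrreducible m f}.ncard =
      {f : MvPolynomial τ F | f.totalDegree = n ∧ MonicIrreducible m f}.ncard :=
    ncard_monicIrreducible_eq_of_card_eq ((hK 1 one_ne_zero).trans (pow_one _)) n
  have hsplit := ncard_monicIrreducible_eq_add m (algebraMap F (AlgebraicClosure F)) n
  have hdivisors : n.divisors.erase 1 = n.divisors.filter (fun k => 1 < k) := by
    rw [← Finset.filter_ne']
    exact Finset.filter_congr fun k hk => by have := Nat.pos_of_mem_divisors hk; lia
  rw [← Finset.add_sum_erase _ _ (Nat.one_mem_divisors.2 hn), hdivisors] at hsum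
  simp only [Nat.cast_one, div_one, one_mul, Nat.divisors_one, Finset.sum_singleton, Nat.div_one,
    ArithmeticFunction.moebius_apply_one, Int.cast_one, hone, hsplit, Nat.cast_add] at hsum
  linarith

end RelativelyIrreducible

theorem degLexKey_le_iff {r : ℕ} {a b : Fin r →₀ ℕ} :
    degLexKey a ≤ degLexKey b ↔ MonomialOrder.degLex.toSyn a ≤ MonomialOrder.degLex.toSyn b := by
  rw [MonomialOrder.degLex_le_iff, Finsupp.DegLex.le_iff, degLexKey, degLexKey, Prod.Lex.le_iff]
  rfl

theorem mvMonic_iff_monic_degLex {r : ℕ} {F : Type*} [Field F] {f : MvPolynomial (Fin r) F} :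
    MvMonic f ↔ MonomialOrder.degLex.Monic f := by
  constructor
  · rintro ⟨d, hd, hmax, hcoeff⟩
    have hf : f ≠ 0 := ne_zero_iff.2 ⟨d, mem_support_iff.1 hd⟩
    have hdeg : d = MonomialOrder.degLex.degree f := MonomialOrder.degLex.toSyn.injective <|
      le_antisymm (MonomialOrder.degLex.le_degree hd)
        (degLexKey_le_iff.1 (hmax _ (MonomialOrder.degLex.degree_mem_support hf)))
    rwa [MonomialOrder.Monic, MonomialOrder.leadingCoeff, ← hdeg]
  · intro hf
    exact ⟨_, MonomialOrder.degLex.degree_mem_support hf.ne_zero,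
      fun _ hd => degLexKey_le_iff.2 (MonomialOrder.degLex.le_degree hd), hf⟩

theorem Icount_eq_ncard (F : Type) [Field F] (r n : ℕ) :
    Icount F r n = {f : MvPolynomial (Fin r) F |
      f.totalDegree = n ∧ MonicIrreducible MonomialOrder.degLex f}.ncard := by
  simp only [Icount, MonicIrreducible, mvMonic_iff_monic_degLex]

theorem Ecount_eq_ncard (F : Type) [Field F] (r n : ℕ) :
    Ecount F r n = {f : MvPolynomial (Fin r) F | f.totalDegree = n ∧
      MonicIrreducible MonomialOrder.degLex f ∧
      ¬ Irreducible (map (algebraMap F (AlgebraicClosure F)) f)}.ncard := by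
  simp only [Ecount, MonicIrreducible, mvMonic_iff_monic_degLex, and_assoc]

theorem natCard_galoisField_mul (p : ℕ) [Fact p.Prime] {e s : ℕ} (he : e ≠ 0) (hs : s ≠ 0) :
    Nat.card (GaloisField p (e * s)) = Nat.card (GaloisField p e) ^ s := by
  rw [GaloisField.card p e he, GaloisField.card p (e * s) (mul_ne_zero he hs), pow_mul]

theorem stmt6 (p e : ℕ) [Fact p.Prime] (he : 1 ≤ e) (r n : ℕ) (hr : 1 ≤ r) (hn : 1 ≤ n) :
    (Ecount (GaloisField p e) r n : ℚ) =
      - ∑ k ∈ n.divisors.filter (fun k => 1 < k), (1 / (k : ℚ)) *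
          ∑ s ∈ k.divisors, (ArithmeticFunction.moebius s : ℚ) *
            Icount (GaloisField p (e * s)) r (n / k) := by
  simp only [Ecount_eq_ncard, Icount_eq_ncard]
  exact stmt6_general MonomialOrder.degLex (fun s => GaloisField p (e * s))
    (fun _ => natCard_galoisField_mul p (Nat.ne_of_gt he)) (Nat.ne_of_gt hn)
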